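/- With φ the map induced by the odd reflection at the odd simple root α_{i+1}, the Serre relations are preserved: φ((ad x^±_{β_j})^{1+|a'_{ij}|}(x^±_{β_i})) = 0; in particular, in ŝl(m|n,Π) one has [[x^±_{α_i,0},x^±_{α_{i+1},0}], [x^±_{α_i,0},x^±_{α_{i+1},0}]] = 0 (the image of [x^±_{β_i,0}, x^±_{β_i,0}] for the odd root β_i) and [x^∓_{α_{i+1},0}, x^∓_{α_{i+1},0}] = 0. -/

import Mathlib

/-!
The Serre relations survive the odd reflection at `α_c` for reasons local to the Dynkin diagram, so
the argument is carried out for an arbitrary triangle-free simply laced diagram (`SerreData`,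
`serre_reflGen`) and then specialised to the positive and the negative half of the presentation.

Write `B_j = [x_j, x_c]` for a neighbour `j` of `c`, and `z` for the generator of the root `-α_c`.

* For an odd reflected root the generator squares to zero, hence so does its adjoint action
  (`adN_two_of_sq`). The only case that needs an argument is `B_j` with `α_j` even (`sq_sbr`).
* For `α_j` odd, `B_j` is even. Then `[B_j, z]` is a multiple of `x_j`, which commutes with `B_j`
  (`adN_two_sbr_lower`); and for a further neighbour `k` of `j`, `[B_j, [B_j, x_k]] = 0` follows from
  the quartic relation at the odd node `j` (`adN_two_sbr_outer`).
* For an even node `k` not adjacent to `c`, `(ad x_k)²` passes through the bracket defining `B_j`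
  (`adN_two_sbr_inner`).
* The two neighbours `i, j` of `c` are not adjacent, and `[B_i, B_j] = 0` is the quartic relation
  at `c` (`sbr_sbr_common`).

The remaining cases are commutation relations or relations left unchanged by the reflection.
-/

/-!
Common framework for formalizing statements about affine super Yangians
`Y_ℏ(ŝl(m|n,Π))` attached to a simple root system `Π` of the affine
Kac–Moody superalgebra `ŝl(m|n)` of type `A^{(1)}(m−1|n−1)`.
-/

noncomputable section

namespace ASY

open scoped TensorProduct

/-- The ground ring `ℂ[ℏ]`. -/
abbrev R : Type := Polynomial ℂ

/-- The formal deformation parameter `ℏ`. -/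
def hbar : R := Polynomial.X

/-- `1/2` as an element of `ℂ[ℏ]`. -/
def half : R := Polynomial.C (1/2 : ℂ)

/-- The sign `(−1)^{p(a)p(b)}` attached to parities `pa`, `pb`. -/
def sg (pa pb : Bool) : R := if pa && pb then -1 else 1

section SuperOps

variable {Y : Type*} [Ring Y] [Algebra R Y]

/-- The supercommutator `[a,b] = ab − (−1)^{p(a)p(b)} ba` of homogeneous elements of
parities `pa` and `pb`. -/
def sbr (pa pb : Bool) (x y : Y) : Y := x * y - sg pa pb • (y * x)

/-- The super anticommutator `{a,b} = ab + (−1)^{p(a)p(b)} ba`. -/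
def sac (pa pb : Bool) (x y : Y) : Y := x * y + sg pa pb • (y * x)

/-- Iterated super-adjoint action `(ad x)^k y` for `x` of parity `pa` and `y` of parity `pb`. -/
def adN (pa pb : Bool) (x : Y) : ℕ → Y → Y
  | 0, y => y
  | k + 1, y => sbr pa (xor pb (pa && decide (k % 2 = 1))) x (adN pa pb x k y)

/-- Iterated super-bracket `[x₁,[x₂,…,[x_k, y]…]]`, all `xᵢ` of parity `pa`, `y` of parity `pb`. -/
def adSeq (pa pb : Bool) : List Y → Y → Y
  | [], y => y
  | x :: l, y => sbr pa (xor pb (pa && decide (l.length % 2 = 1))) x (adSeq pa pb l y)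

end SuperOps

/-- A simple root system `Π` of the affine Kac–Moody superalgebra `ŝl(m|n)`
(type `A^{(1)}(m−1|n−1)`): a cyclic arrangement of the `m + n` weights
`ε₁,…,ε_m, δ₁,…,δ_n`, recorded by the type of the weight at each position
(`false` = an `ε`-weight of norm `+1`, `true` = a `δ`-weight of norm `−1`);
the simple roots are `α_i = e_i − e_{i+1}` (indices mod `m+n`). -/
structure SimpleRootSystem (m n : ℕ) : Type where
  /-- the type of the weight at each position -/
  τ : Fin (m + n) → Bool
  /-- there are exactly `n` weights of `δ`-type -/
  card_delta : (Finset.univ.filter fun k => τ k = true).card = n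

namespace SimpleRootSystem

variable {m n : ℕ}

/-- The norm `(e_k, e_k) = ±1` of the `k`-th weight. -/
def w (P : SimpleRootSystem m n) (k : Fin (m + n)) : ℤ := if P.τ k then -1 else 1

variable [NeZero (m + n)]

/-- The coefficient of `e_k` in the simple root `α_i = e_i − e_{i+1}`. -/
def coeffα (i k : Fin (m + n)) : ℤ := (if k = i then 1 else 0) - (if k = i + 1 then 1 else 0)

/-- The (symmetric) Cartan matrix `a_{ij} = (α_i, α_j)` of `Π`. -/
def a (P : SimpleRootSystem m n) (i j : Fin (m + n)) : ℤ :=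
  ∑ k, P.w k * coeffα i k * coeffα j k

/-- The parity of the simple root `α_i` (`true` iff `α_i` is odd, iff `a_{ii} = 0`). -/
def par (P : SimpleRootSystem m n) (i : Fin (m + n)) : Bool := P.τ i != P.τ (i + 1)

/-- The reflection `s_{α_i}` on simple root systems: on the weight arrangement it
swaps the weights at positions `i` and `i+1`.  For `α_i` even it preserves `Π`;
for `α_i` odd it is the odd reflection `Π ↦ Π₁`. -/
def reflect (P : SimpleRootSystem m n) (i : Fin (m + n)) : SimpleRootSystem m n where
  τ := P.τ ∘ Equiv.swap i (i + 1)
  card_delta := by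
    have h1 : (Finset.univ.filter fun k => (P.τ ∘ Equiv.swap i (i + 1)) k = true).card
        = (Finset.univ.filter fun k => P.τ k = true).card :=
      Finset.card_equiv (Equiv.swap i (i + 1)) (fun k => by simp)
    rw [h1, P.card_delta]

/-- Applying a word of simple reflections to a simple root system. -/
def applyWord (P : SimpleRootSystem m n) : List (Fin (m + n)) → SimpleRootSystem m n
  | [] => P
  | c :: l => applyWord (P.reflect c) l

/-- The word consists of even reflections at every stage (i.e. it represents an
element of the Weyl group, generated by even reflections). -/
def IsEvenWord (P : SimpleRootSystem m n) : List (Fin (m + n)) → Prop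
  | [] => True
  | c :: l => P.par c = false ∧ IsEvenWord (P.reflect c) l

end SimpleRootSystem

end ASY

namespace ASY

/-- Chevalley generators `x^±_i`, `h_i` of the affine Kac–Moody superalgebra `ŝl(m|n,Π)`. -/
inductive KGen (N : ℕ) : Type
  | xp (i : Fin N)
  | xm (i : Fin N)
  | h (i : Fin N)

/-- The free algebra on the Chevalley generators. -/
abbrev KFree (m n : ℕ) : Type := FreeAlgebra R (KGen (m + n))

section KMDefs

variable {m n : ℕ}

/-- `x^+_i` in the free algebra. -/
def KXp (i : Fin (m + n)) : KFree m n := FreeAlgebra.ι R (KGen.xp i)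

/-- `x^−_i` in the free algebra. -/
def KXm (i : Fin (m + n)) : KFree m n := FreeAlgebra.ι R (KGen.xm i)

/-- `h_i` in the free algebra. -/
def KH (i : Fin (m + n)) : KFree m n := FreeAlgebra.ι R (KGen.h i)

variable [NeZero (m + n)]

/-- The defining relations of (the universal enveloping superalgebra of) the affine
Kac–Moody superalgebra `ŝl(m|n,Π)` with Chevalley generators `x^±_i`, `h_i`. -/
inductive KRel (P : SimpleRootSystem m n) : KFree m n → KFree m n → Prop
  /-- `[h_i, h_j] = 0` -/
  | hh (i j : Fin (m + n)) : KRel P (sbr false false (KH i) (KH j)) 0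
  /-- `[h_i, x^+_j] = a_{ij} x^+_j` -/
  | hxp (i j : Fin (m + n)) :
      KRel P (sbr false (P.par j) (KH i) (KXp j)) (((P.a i j : ℤ) : R) • KXp j)
  /-- `[h_i, x^−_j] = −a_{ij} x^−_j` -/
  | hxm (i j : Fin (m + n)) :
      KRel P (sbr false (P.par j) (KH i) (KXm j)) ((-(P.a i j : ℤ) : R) • KXm j)
  /-- `[x^+_i, x^−_j] = δ_{ij} h_i` -/
  | pm (i j : Fin (m + n)) :
      KRel P (sbr (P.par i) (P.par j) (KXp i) (KXm j)) (if i = j then KH i else 0)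
  /-- Serre relation `(ad x^+_i)^{1+|a_{ij}|}(x^+_j) = 0` for `i ≠ j` -/
  | serrep (i j : Fin (m + n)) (hij : i ≠ j) :
      KRel P (adN (P.par i) (P.par j) (KXp i) (1 + (P.a i j).natAbs) (KXp j)) 0
  /-- Serre relation `(ad x^−_i)^{1+|a_{ij}|}(x^−_j) = 0` for `i ≠ j` -/
  | serrem (i j : Fin (m + n)) (hij : i ≠ j) :
      KRel P (adN (P.par i) (P.par j) (KXm i) (1 + (P.a i j).natAbs) (KXm j)) 0
  /-- `[x^+_t, x^+_t] = 0` for `α_t` odd -/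
  | oddp (t : Fin (m + n)) (ht : P.par t = true) : KRel P (sbr true true (KXp t) (KXp t)) 0
  /-- `[x^−_t, x^−_t] = 0` for `α_t` odd -/
  | oddm (t : Fin (m + n)) (ht : P.par t = true) : KRel P (sbr true true (KXm t) (KXm t)) 0
  /-- `[[x^+_{t−1},x^+_t],[x^+_t,x^+_{t+1}]] = 0` for `α_t` odd -/
  | oddSp (t : Fin (m + n)) (ht : P.par t = true) :
      KRel P (sbr (xor (P.par (t - 1)) true) (xor true (P.par (t + 1)))
        (sbr (P.par (t - 1)) true (KXp (t - 1)) (KXp t))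
        (sbr true (P.par (t + 1)) (KXp t) (KXp (t + 1)))) 0
  /-- `[[x^−_{t−1},x^−_t],[x^−_t,x^−_{t+1}]] = 0` for `α_t` odd -/
  | oddSm (t : Fin (m + n)) (ht : P.par t = true) :
      KRel P (sbr (xor (P.par (t - 1)) true) (xor true (P.par (t + 1)))
        (sbr (P.par (t - 1)) true (KXm (t - 1)) (KXm t))
        (sbr true (P.par (t + 1)) (KXm t) (KXm (t + 1)))) 0

/-- (The universal enveloping superalgebra of) the affine Kac–Moody superalgebra
`ŝl(m|n,Π)`, presented by the Chevalley generators and relations. -/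
abbrev KM (P : SimpleRootSystem m n) : Type := RingQuot (KRel P)

/-- Projection onto `ŝl(m|n,Π)`. -/
def mkK (P : SimpleRootSystem m n) : KFree m n →ₐ[R] KM P := RingQuot.mkAlgHom R (KRel P)

/-- Chevalley generator `x^+_i` of `ŝl(m|n,Π)`. -/
def kxp (P : SimpleRootSystem m n) (i : Fin (m + n)) : KM P := mkK P (KXp i)

/-- Chevalley generator `x^−_i` of `ŝl(m|n,Π)`. -/
def kxm (P : SimpleRootSystem m n) (i : Fin (m + n)) : KM P := mkK P (KXm i)

/-- Chevalley generator `h_i` of `ŝl(m|n,Π)`. -/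
def kh (P : SimpleRootSystem m n) (i : Fin (m + n)) : KM P := mkK P (KH i)

/-- The image under `φ` (the map induced by the odd reflection at the odd simple root `α_c`)
of the Cartan generator `h_{β_j}` of `ŝl(m|n,Π₁)` inside `ŝl(m|n,Π)`. -/
def phiH (P : SimpleRootSystem m n) (c j : Fin (m + n)) : KM P :=
  if j = c then -(kh P c)
  else if j = c - 1 then kh P (c - 1) + kh P c
  else if j = c + 1 then kh P (c + 1) + kh P c
  else kh P j

/-- The image under `φ` of the generator `x^+_{β_j}` of `ŝl(m|n,Π₁)` inside `ŝl(m|n,Π)`. -/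
def phiXp (P : SimpleRootSystem m n) (c j : Fin (m + n)) : KM P :=
  if j = c then kxm P c
  else if j = c - 1 then sbr (P.par (c - 1)) true (kxp P (c - 1)) (kxp P c)
  else if j = c + 1 then sbr (P.par (c + 1)) true (kxp P (c + 1)) (kxp P c)
  else kxp P j

/-- The image under `φ` of the generator `x^−_{β_j}` of `ŝl(m|n,Π₁)` inside `ŝl(m|n,Π)`. -/
def phiXm (P : SimpleRootSystem m n) (c j : Fin (m + n)) : KM P :=
  if j = c then kxp P c
  else if j = c - 1 then -(sbr (P.par (c - 1)) true (kxm P (c - 1)) (kxm P c))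
  else if j = c + 1 then -(sbr (P.par (c + 1)) true (kxm P (c + 1)) (kxm P c))
  else kxm P j

end KMDefs

end ASY

namespace ASY

/-! ### Supercommutator identities and the abstract odd reflection -/

section Abstract

variable {Y : Type*} [Ring Y] [Algebra R Y]

lemma sbr_eq_zero_symm {p q : Bool} {x y : Y} (h : sbr p q x y = 0) : sbr q p y x = 0 := by
  cases p <;> cases q <;> simp [sbr, sg] at h ⊢ <;>
    first
      | linear_combination (norm := (noncomm_ring; done)) h
      | linear_combination (norm := (noncomm_ring; done)) -h

lemma sbr_smul (p q : Bool) (r s : R) (x y : Y) :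
    sbr p q (r • x) (s • y) = (r * s) • sbr p q x y := by
  simp only [sbr, smul_mul_smul_comm, smul_sub, mul_comm s r, smul_comm (r * s) (sg p q)]

lemma sbr_zero_right (p q : Bool) (x : Y) : sbr p q x 0 = 0 := by
  simp [sbr]

lemma adN_smul (p q : Bool) (r s : R) (x y : Y) (k : ℕ) :
    adN p q (r • x) k (s • y) = (r ^ k * s) • adN p q x k y := by
  induction k with
  | zero => simp [adN]
  | succ k ih => simp only [adN, ih, sbr_smul]; ring_nf

lemma adN_one (p q : Bool) (x y : Y) : adN p q x 1 y = sbr p q x y := by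
  simp [adN]

lemma adN_two (p q : Bool) (x y : Y) :
    adN p q x 2 y = sbr p (xor q p) x (sbr p q x y) := by
  simp [adN]

lemma eq_zero_of_add_self {b : Y} (h : b + b = 0) : b = 0 := by
  have h2 : half • (b + b) = b := by
    rw [← two_smul R b, smul_smul]
    have : half * 2 = 1 := by
      rw [half, ← Polynomial.C_ofNat, ← Polynomial.C_mul]; norm_num
    rw [this, one_smul]
  rw [← h2, h, smul_zero]

lemma neg_eq_smul (x : Y) : -x = (-1 : R) • x := by simp

lemma sbr_odd_comm (x y : Y) : sbr true true x y = sbr true true y x := by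
  simp [sbr, sg, add_comm]

/-- An odd element of square zero acts with square zero in the adjoint action. -/
lemma adN_two_of_sq {x : Y} (hx : x * x = 0) (q : Bool) (y : Y) :
    adN true q x 2 y = 0 := by
  rw [adN_two]
  cases q <;> simp [sbr, sg] <;>
    linear_combination (norm := (noncomm_ring; done)) hx * y - y * hx

/-- For `x` even and `y` odd with `y² = 0` and `[x,[x,y]] = 0`, the odd element `[x,y]` squares to
zero: apply `ad x` twice to `[y,y] = 0`. -/
lemma sq_sbr {x y : Y} (hy : y * y = 0) (hs : adN false true x 2 y = 0) :
    sbr false true x y * sbr false true x y = 0 := by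
  apply eq_zero_of_add_self
  rw [adN_two] at hs
  simp [sbr, sg] at hs ⊢
  linear_combination (norm := (noncomm_ring; done)) -2 * x * hy * x - hs * y - y * hs +
    x * x * hy + hy * x * x

lemma sbr_sbr_of_comm {p q : Bool} {x y z : Y} (hx : sbr p q x z = 0)
    (hy : sbr true q y z = 0) : sbr (!p) q (sbr p true x y) z = 0 := by
  cases p <;> cases q <;> simp [sbr, sg] at hx hy ⊢ <;>
    first
      | linear_combination (norm := (noncomm_ring; done)) hx * y + x * hy - y * hx - hy * x
      | linear_combination (norm := (noncomm_ring; done)) -hx * y + x * hy - y * hx - hy * x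
      | linear_combination (norm := (noncomm_ring; done)) hx * y + x * hy + y * hx + hy * x
      | linear_combination (norm := (noncomm_ring; done)) -hx * y + x * hy + y * hx - hy * x

lemma sbr_sbr_reverse {p q : Bool} {x y z : Y}
    (h : sbr (xor p true) (xor true q) (sbr p true x y) (sbr true q y z) = 0) :
    sbr (xor q true) (xor true p) (sbr q true z y) (sbr true p y x) = 0 := by
  cases p <;> cases q <;> simp [sbr, sg] at h ⊢ <;>
    first
      | linear_combination (norm := (noncomm_ring; done)) h
      | linear_combination (norm := (noncomm_ring; done)) -h

lemma sbr_sbr_common {p q : Bool} {x y z : Y}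
    (h : sbr (xor p true) (xor true q) (sbr p true x y) (sbr true q y z) = 0) :
    sbr (!p) (!q) (sbr p true x y) (sbr q true z y) = 0 := by
  cases p <;> cases q <;> simp [sbr, sg] at h ⊢ <;>
    first
      | linear_combination (norm := (noncomm_ring; done)) h
      | linear_combination (norm := (noncomm_ring; done)) -h

/-- `[[x,y],[[x,y],u]] = 0` for odd `x`, `y`, when `u` commutes with `y` and
`[[u,x],[x,y]] = 0`: indeed `[u,[x,y]] = [[u,x],y]`, and `y` commutes with `[x,y]`. -/
lemma adN_two_sbr_outer {q : Bool} {u x y : Y} (hy : y * y = 0)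
    (huy : sbr true q y u = 0)
    (h : sbr (xor q true) (xor true true) (sbr q true u x) (sbr true true x y) = 0) :
    adN false q (sbr true true x y) 2 u = 0 := by
  rw [adN_two]
  have hB : sbr true true x y * y = y * sbr true true x y := by
    simp [sbr, sg]
    linear_combination (norm := (noncomm_ring; done)) x * hy - hy * x
  have hB' : ∃ e : R, sbr false q (sbr true true x y) u
      = e • sbr (xor q true) true (sbr q true u x) y := by
    refine ⟨-1, ?_⟩
    cases q <;> simp [sbr, sg] at huy ⊢
    · linear_combination (norm := (noncomm_ring; done)) huy * x + x * huy
    · linear_combination (norm := (noncomm_ring; done)) -huy * x + x * huy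
  obtain ⟨e, he⟩ := hB'
  have h0 : sbr false q (sbr true true x y) (sbr (xor q true) true (sbr q true u x) y) = 0 := by
    generalize sbr true true x y = B at *
    generalize sbr q true u x = C at *
    cases q <;> simp [sbr, sg] at h ⊢
    · linear_combination (norm := (noncomm_ring; done)) -h * y - y * h + hB * C + C * hB
    · linear_combination (norm := (noncomm_ring; done)) -h * y + y * h - hB * C + C * hB
  have := sbr_smul false q 1 e (sbr true true x y) (sbr (xor q true) true (sbr q true u x) y)
  rw [one_smul, h0, smul_zero] at this
  simpa [he] using this

/-- If the even element `u` commutes with `y`, then `(ad u)² [x,y] = [(ad u)² x, y]`. -/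
lemma adN_two_sbr_inner {p : Bool} {u x y : Y} (huy : sbr false true u y = 0)
    (h : adN false p u 2 x = 0) : adN false (!p) u 2 (sbr p true x y) = 0 := by
  rw [adN_two] at h ⊢
  cases p <;> simp [sbr, sg] at h huy ⊢
  · linear_combination (norm := (noncomm_ring; done)) h * y - y * h - huy * (u * x) - u * huy * x
      + 2 * huy * x * u - x * u * huy - x * huy * u + 2 * u * x * huy
  · linear_combination (norm := (noncomm_ring; done)) h * y + y * h + huy * (u * x) + u * huy * x
      - 2 * huy * x * u - x * u * huy - x * huy * u + 2 * u * x * huy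

/-- For odd `x`, `y`, `z` with `[x,z] = 0`, one has `[[x,y],z] = [x,[y,z]] = -[h,x]`
where `h = [y,z]`. -/
lemma sbr_sbr_lower {x y z h : Y} {r : R} (hxz : sbr true true x z = 0)
    (hyz : sbr true true y z = h) (hh : sbr false true h x = r • x) :
    sbr false true (sbr true true x y) z = (-r) • x := by
  rw [neg_smul, ← hh, ← hyz]
  simp [sbr, sg] at hxz ⊢
  linear_combination (norm := (noncomm_ring; done)) y * hxz - hxz * y

/-- `[x,y]` commutes with `x` because `x² = 0`. -/
lemma adN_two_sbr_lower {x y z : Y} {r : R} (hx : x * x = 0)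
    (h : sbr false true (sbr true true x y) z = r • x) :
    adN false true (sbr true true x y) 2 z = 0 := by
  rw [adN_two, h]
  have h0 : sbr false true (sbr true true x y) x = 0 := by
    simp [sbr, sg]
    linear_combination (norm := (noncomm_ring; done)) y * hx - hx * y
  have := sbr_smul false true 1 r (sbr true true x y) x
  rw [one_smul, h0, smul_zero] at this
  simpa using this

/-- The Serre-type relations of one half (`+` or `-`) of a contragredient superalgebra whose
Dynkin diagram is the simply laced graph `adj`, with parities `p`. -/
structure SerreData {I : Type*} (adj : I → I → Prop) (p : I → Bool) (X : I → Y) : Prop where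
  comm : ∀ i j, i ≠ j → ¬ adj i j → sbr (p i) (p j) (X i) (X j) = 0
  serre : ∀ i j, adj i j → adN (p i) (p j) (X i) 2 (X j) = 0
  sq : ∀ t, p t = true → X t * X t = 0
  quart : ∀ i t j, p t = true → adj i t → adj j t → i ≠ j →
    sbr (xor (p i) true) (xor true (p j)) (sbr (p i) true (X i) (X t))
      (sbr true (p j) (X t) (X j)) = 0

open Classical in
/-- The odd reflection at `c` of the generators `X`, where `Z` is the generator for the opposite
root `-α_c`; signs are disregarded. -/
def reflGen {I : Type*} (adj : I → I → Prop) (p : I → Bool) (X : I → Y) (c : I) (Z : Y)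
    (j : I) : Y :=
  if j = c then Z else if adj j c then sbr (p j) true (X j) (X c) else X j

open Classical in
/-- The parities after the odd reflection at `c`. -/
def reflPar {I : Type*} (adj : I → I → Prop) (p : I → Bool) (c : I) (j : I) : Bool :=
  if adj j c then !(p j) else p j

open Classical in
/-- Serre relations for the reflected generators, over a triangle-free diagram. `hXZ` says that `Z`
commutes with the generators other than `X c`, and `hlow` that `[[X i, X c], Z]` is proportional
to `X i`. -/
theorem serre_reflGen {I : Type*} {adj : I → I → Prop} {p : I → Bool} {X : I → Y}
    (S : SerreData adj p X) (hsymm : ∀ i j, adj i j → adj j i) (hirr : ∀ i, ¬ adj i i)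
    (htri : ∀ i j k, adj i k → adj j k → ¬ adj i j)
    (c : I) (hc : p c = true) (Z : Y) (hZ : Z * Z = 0)
    (hXZ : ∀ i, i ≠ c → sbr (p i) true (X i) Z = 0)
    (hlow : ∀ i, adj i c → p i = true →
      ∃ r : R, sbr false true (sbr true true (X i) (X c)) Z = r • X i)
    (j k : I) (hjk : j ≠ k) :
    adN (reflPar adj p c j) (reflPar adj p c k) (reflGen adj p X c Z j)
      (1 + if adj j k then 1 else 0) (reflGen adj p X c Z k) = 0 := by
  have hcc := S.sq c hc
  -- an even neighbour of `c` becomes odd, with reflected generator of square zero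
  have hB : ∀ i, adj i c → p i = false →
      sbr (p i) true (X i) (X c) * sbr (p i) true (X i) (X c) = 0 := by
    intro i hi hpi
    have := S.serre i c hi
    rw [hpi, hc] at this
    rw [hpi]
    exact sq_sbr hcc this
  have hcomm : ∀ i, i ≠ c → ¬ adj i c → sbr true (p i) (X c) (X i) = 0 := by
    intro i h1 h2
    have := S.comm c i (Ne.symm h1) (fun h => h2 (hsymm _ _ h))
    rwa [hc] at this
  by_cases hadj : adj j k
  · simp only [hadj, if_true, Nat.reduceAdd]
    by_cases hj : j = c
    · subst hj
      simp only [reflGen, reflPar, hirr, if_true, if_false, hc]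
      exact adN_two_of_sq hZ _ _
    by_cases hjc : adj j c
    · by_cases hpj : p j = true
      · by_cases hk : k = c
        · subst hk
          obtain ⟨r, hr⟩ := hlow j hjc hpj
          simp only [reflGen, reflPar, hirr, hj, hjc, if_true, if_false, hc, hpj, Bool.not_true]
          exact adN_two_sbr_lower (S.sq j hpj) hr
        · have hkc : ¬ adj k c := fun h => htri j k c hjc h hadj
          simp only [reflGen, reflPar, hk, hkc, hj, hjc, if_true, if_false, hpj, Bool.not_true]
          have hq := S.quart k j c hpj (hsymm _ _ hadj) (hsymm _ _ hjc) hk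
          rw [hc] at hq
          exact adN_two_sbr_outer hcc (hcomm k hk hkc) hq
      · simp only [Bool.not_eq_true] at hpj
        have := hB j hjc hpj
        simp only [reflGen, reflPar, hj, hjc, if_true, if_false, hpj, Bool.not_false] at this ⊢
        exact adN_two_of_sq this _ _
    · by_cases hpj : p j = true
      · simp only [reflGen, reflPar, hj, hjc, if_false, hpj]
        exact adN_two_of_sq (S.sq j hpj) _ _
      · have hs := S.serre j k hadj
        simp only [Bool.not_eq_true] at hpj
        have hk : k ≠ c := fun h => hjc (h ▸ hadj)
        by_cases hkc : adj k c
        · simp only [reflGen, reflPar, hj, hjc, hk, hkc, if_true, if_false, hpj] at hs ⊢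
          have h1 := sbr_eq_zero_symm (hcomm j hj hjc)
          rw [hpj] at h1
          exact adN_two_sbr_inner h1 hs
        · simpa only [reflGen, reflPar, hj, hjc, hk, hkc, if_false] using hs
  · simp only [hadj, if_false, Nat.add_zero, adN_one]
    have hadj' : ¬ adj k j := fun h => hadj (hsymm _ _ h)
    by_cases hj : j = c
    · subst hj
      have hk : k ≠ j := hjk.symm
      simp only [reflGen, reflPar, hirr, hk, hadj', if_true, if_false, hc]
      exact sbr_eq_zero_symm (hXZ k hk)
    by_cases hk : k = c
    · subst hk
      simp only [reflGen, reflPar, hirr, hj, hadj, if_true, if_false, hc]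
      exact hXZ j hj
    by_cases hjc : adj j c <;> by_cases hkc : adj k c <;>
      simp only [reflGen, reflPar, hj, hk, hjc, hkc, if_true, if_false]
    · exact sbr_sbr_common (S.quart j c k hc hjc hkc hjk)
    · exact sbr_sbr_of_comm (S.comm j k hjk hadj) (hcomm k hk hkc)
    · exact sbr_eq_zero_symm (sbr_sbr_of_comm (S.comm k j hjk.symm hadj') (hcomm j hj hjc))
    · exact S.comm j k hjk hadj

end Abstract

/-! ### The affine Dynkin diagram and the presentation -/

section Concrete

variable {m n : ℕ}

lemma natAbs_w (P : SimpleRootSystem m n) (i : Fin (m + n)) : (P.w i).natAbs = 1 := by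
  unfold SimpleRootSystem.w; split_ifs <;> rfl

variable [NeZero (m + n)]

/-- Adjacency in the affine Dynkin diagram, a cycle of length `m + n`. -/
def cadj (i j : Fin (m + n)) : Prop := j = i + 1 ∨ i = j + 1

lemma cadj_symm (i j : Fin (m + n)) (h : cadj i j) : cadj j i := Or.symm h

lemma one_ne (h : 5 ≤ m + n) : (1 : Fin (m + n)) ≠ 0 ∧ (1 + 1 : Fin (m + n)) ≠ 0 ∧
    (1 + 1 + 1 : Fin (m + n)) ≠ 0 := by
  have h1 : 1 % (m + n) = 1 := Nat.mod_eq_of_lt (by omega)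
  have h2 : 2 % (m + n) = 2 := Nat.mod_eq_of_lt (by omega)
  have h3 : 3 % (m + n) = 3 := Nat.mod_eq_of_lt (by omega)
  refine ⟨?_, ?_, ?_⟩ <;> simp [Fin.ext_iff, Fin.val_add, h1, h2, h3]

open scoped Fin.CommRing in
lemma add_one_ne (h : 5 ≤ m + n) (i : Fin (m + n)) : i + 1 ≠ i := fun e =>
  (one_ne h).1 (by linear_combination e)

open scoped Fin.CommRing in
lemma add_two_ne (h : 5 ≤ m + n) (i : Fin (m + n)) : i + 1 + 1 ≠ i := fun e =>
  (one_ne h).2.1 (by linear_combination e)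

lemma cadj_irrefl (h : 5 ≤ m + n) (i : Fin (m + n)) : ¬ cadj i i := by
  have := add_one_ne h i
  rintro (e | e) <;> exact this e.symm

open scoped Fin.CommRing in
lemma cadj_triangle_free (h : 5 ≤ m + n) (i j k : Fin (m + n)) (hik : cadj i k)
    (hjk : cadj j k) : ¬ cadj i j := by
  obtain ⟨h1, -, h3⟩ := one_ne h
  rintro (e | e) <;> rcases hik with a | a <;> rcases hjk with b | b <;>
    first
      | exact h1 (by linear_combination -e + a - b)
      | exact h1 (by linear_combination e - a - b)
      | exact h1 (by linear_combination -e - a + b)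
      | exact h3 (by linear_combination -e - a - b)

open SimpleRootSystem

lemma a_eq (P : SimpleRootSystem m n) (i j : Fin (m + n)) :
    P.a i j = P.w i * coeffα j i - P.w (i + 1) * coeffα j (i + 1) := by
  have : ∀ k, P.w k * coeffα i k * coeffα j k =
      (if k = i then P.w k * coeffα j k else 0) - (if k = i + 1 then P.w k * coeffα j k else 0) := by
    intro k
    rw [coeffα]
    split_ifs <;> ring
  simp [a, this, Finset.sum_sub_distrib]

open Classical in
lemma natAbs_a (h : 5 ≤ m + n) (P : SimpleRootSystem m n) (i j : Fin (m + n)) (hij : i ≠ j) :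
    (P.a i j).natAbs = if cadj i j then 1 else 0 := by
  rw [a_eq]
  by_cases h1 : j = i + 1
  · subst h1
    simp [coeffα, cadj, (add_one_ne h _).symm, (add_two_ne h _).symm, natAbs_w]
  by_cases h2 : i = j + 1
  · subst h2
    simp [coeffα, cadj, add_one_ne h, add_two_ne h, natAbs_w]
  · simp [coeffα, cadj, h1, h2, hij, Ne.symm h1]

lemma reflect_par (h : 5 ≤ m + n) (P : SimpleRootSystem m n) (c : Fin (m + n))
    (hc : P.par c = true) (j : Fin (m + n)) :
    (P.reflect c).par j = reflPar cadj P.par c j := by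
  have hc' : P.τ (c + 1) = !P.τ c := by
    simp only [par] at hc
    revert hc; cases P.τ c <;> cases P.τ (c + 1) <;> simp
  by_cases h0 : j = c
  · subst h0
    simp [reflect, par, reflPar, cadj_irrefl h, hc']
  by_cases h1 : c = j + 1
  · subst h1
    have e1 : Equiv.swap (j + 1) (j + 1 + 1) j = j :=
      Equiv.swap_apply_of_ne_of_ne (add_one_ne h j).symm (add_two_ne h j).symm
    simp [reflect, par, reflPar, cadj, hc', e1]
  by_cases h2 : j = c + 1
  · subst h2
    have e1 : Equiv.swap c (c + 1) (c + 1 + 1) = c + 1 + 1 :=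
      Equiv.swap_apply_of_ne_of_ne (add_two_ne h c) (add_one_ne h _)
    simp [reflect, par, reflPar, cadj, hc', e1]
  · have e1 : Equiv.swap c (c + 1) j = j := Equiv.swap_apply_of_ne_of_ne h0 h2
    have e2 : Equiv.swap c (c + 1) (j + 1) = j + 1 :=
      Equiv.swap_apply_of_ne_of_ne (Ne.symm h1) (fun e => h0 (by simpa using e))
    simp [reflect, par, reflPar, cadj, h1, h2, e1, e2]

section Map

variable (P : SimpleRootSystem m n)

lemma mkK_sbr (p q : Bool) (x y : KFree m n) :
    mkK P (sbr p q x y) = sbr p q (mkK P x) (mkK P y) := by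
  simp [sbr]

lemma mkK_adN (p q : Bool) (x y : KFree m n) (k : ℕ) :
    mkK P (adN p q x k y) = adN p q (mkK P x) k (mkK P y) := by
  induction k with
  | zero => rfl
  | succ k ih => simp only [adN, mkK_sbr, ih]

lemma mkK_rel {x y : KFree m n} (h : KRel P x y) : mkK P x = mkK P y :=
  RingQuot.mkAlgHom_rel R h

lemma sq_of_sbr {Y : Type*} [Ring Y] [Algebra R Y] {x : Y} (h : sbr true true x x = 0) :
    x * x = 0 :=
  eq_zero_of_add_self (by simpa [sbr, sg] using h)

/-- The quartic relation in the fixed cyclic order `t - 1, t, t + 1` gives it in both orders. -/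
lemma quart_of_succ {Y : Type*} [Ring Y] [Algebra R Y] {p : Fin (m + n) → Bool}
    {X : Fin (m + n) → Y}
    (hq : ∀ t, p t = true → sbr (xor (p (t - 1)) true) (xor true (p (t + 1)))
      (sbr (p (t - 1)) true (X (t - 1)) (X t)) (sbr true (p (t + 1)) (X t) (X (t + 1))) = 0)
    (i t j : Fin (m + n)) (ht : p t = true) (hi : cadj i t) (hj : cadj j t) (hij : i ≠ j) :
    sbr (xor (p i) true) (xor true (p j)) (sbr (p i) true (X i) (X t))
      (sbr true (p j) (X t) (X j)) = 0 := by
  have h := hq t ht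
  rcases hi with hi | hi <;> rcases hj with hj | hj
  · exact absurd (add_right_cancel (hi.symm.trans hj)) hij
  · have : i = t - 1 := eq_sub_of_add_eq hi.symm
    subst hj; rw [this]; exact h
  · have : j = t - 1 := eq_sub_of_add_eq hj.symm
    subst hi; rw [this]; exact sbr_sbr_reverse h
  · exact absurd (hi.trans hj.symm) hij

lemma serreData_kxp (h : 5 ≤ m + n) : SerreData cadj P.par (kxp P) where
  comm i j hij hadj := by
    have := mkK_rel P (KRel.serrep i j hij)
    rw [mkK_adN, natAbs_a h P i j hij, if_neg hadj, map_zero] at this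
    simpa only [Nat.add_zero, adN_one] using! this
  serre i j hadj := by
    have hij : i ≠ j := by rintro rfl; exact cadj_irrefl h i hadj
    have := mkK_rel P (KRel.serrep i j hij)
    rwa [mkK_adN, natAbs_a h P i j hij, if_pos hadj, map_zero] at this
  sq t ht := by
    have := mkK_rel P (KRel.oddp t ht)
    rw [mkK_sbr, map_zero] at this
    exact sq_of_sbr this
  quart := quart_of_succ fun t ht => by
    have := mkK_rel P (KRel.oddSp t ht)
    simpa only [mkK_sbr, map_zero] using! this

lemma serreData_kxm (h : 5 ≤ m + n) : SerreData cadj P.par (kxm P) where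
  comm i j hij hadj := by
    have := mkK_rel P (KRel.serrem i j hij)
    rw [mkK_adN, natAbs_a h P i j hij, if_neg hadj, map_zero] at this
    simpa only [Nat.add_zero, adN_one] using! this
  serre i j hadj := by
    have hij : i ≠ j := by rintro rfl; exact cadj_irrefl h i hadj
    have := mkK_rel P (KRel.serrem i j hij)
    rwa [mkK_adN, natAbs_a h P i j hij, if_pos hadj, map_zero] at this
  sq t ht := by
    have := mkK_rel P (KRel.oddm t ht)
    rw [mkK_sbr, map_zero] at this
    exact sq_of_sbr this
  quart := quart_of_succ fun t ht => by
    have := mkK_rel P (KRel.oddSm t ht)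
    simpa only [mkK_sbr, map_zero] using! this

lemma sbr_kxp_kxm (i j : Fin (m + n)) :
    sbr (P.par i) (P.par j) (kxp P i) (kxm P j) = if i = j then kh P i else 0 := by
  have := mkK_rel P (KRel.pm i j)
  rw [mkK_sbr, apply_ite (mkK P), map_zero] at this
  exact this

lemma sbr_kxm_kxp_self (c : Fin (m + n)) (hc : P.par c = true) :
    sbr true true (kxm P c) (kxp P c) = kh P c := by
  have := sbr_kxp_kxm P c c
  rw [if_pos rfl, hc] at this
  rw [← this, sbr_odd_comm]

open Classical in
lemma phiXp_eq (c j : Fin (m + n)) :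
    phiXp P c j = reflGen cadj P.par (kxp P) c (kxm P c) j := by
  unfold phiXp reflGen
  by_cases h0 : j = c
  · simp [h0]
  by_cases h1 : j = c - 1
  · subst h1; simp [h0, cadj]
  by_cases h2 : j = c + 1
  · subst h2; simp [h0, h1, cadj]
  · have h3 : ¬ c = j + 1 := fun e => h1 (eq_sub_of_add_eq e.symm)
    simp [h0, h1, h2, h3, cadj]

open Classical in
/-- The scalar is `-1` at the neighbours of `c` and `1` elsewhere. -/
lemma phiXm_eq (c j : Fin (m + n)) :
    ∃ s : R, phiXm P c j = s • reflGen cadj P.par (kxm P) c (kxp P c) j := by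
  unfold phiXm reflGen
  by_cases h0 : j = c
  · exact ⟨1, by simp [h0]⟩
  by_cases h1 : j = c - 1
  · subst h1; exact ⟨-1, by simp [h0, cadj]; exact neg_eq_smul (Y := KM P) _⟩
  by_cases h2 : j = c + 1
  · subst h2; exact ⟨-1, by simp [h0, h1, cadj]; exact neg_eq_smul (Y := KM P) _⟩
  · have h3 : ¬ c = j + 1 := fun e => h1 (eq_sub_of_add_eq e.symm)
    exact ⟨1, by simp [h0, h1, h2, h3, cadj]⟩

open Classical in
lemma serre_phiXp (h : 5 ≤ m + n) (c : Fin (m + n)) (hc : P.par c = true)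
    (j k : Fin (m + n)) (hjk : j ≠ k) :
    adN (reflPar cadj P.par c j) (reflPar cadj P.par c k) (phiXp P c j)
      (1 + if cadj j k then 1 else 0) (phiXp P c k) = 0 := by
  have hXZ : ∀ i, i ≠ c → sbr (P.par i) true (kxp P i) (kxm P c) = 0 := fun i hi => by
    have := sbr_kxp_kxm P i c
    rwa [if_neg hi, hc] at this
  rw [phiXp_eq, phiXp_eq]
  refine serre_reflGen (serreData_kxp P h) cadj_symm (cadj_irrefl h) (cadj_triangle_free h) c hc _
    ((serreData_kxm P h).sq c hc) hXZ (fun i hi hpi => ⟨-((P.a c i : ℤ) : R), ?_⟩) j k hjk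
  have hic : i ≠ c := by rintro rfl; exact cadj_irrefl h i hi
  have h1 := hXZ i hic
  have h2 := sbr_kxp_kxm P c c
  have h3 := mkK_rel P (KRel.hxp c i)
  rw [hpi] at h1
  rw [if_pos rfl, hc] at h2
  rw [mkK_sbr, map_smul, hpi] at h3
  exact sbr_sbr_lower h1 h2 h3

open Classical in
lemma serre_phiXm (h : 5 ≤ m + n) (c : Fin (m + n)) (hc : P.par c = true)
    (j k : Fin (m + n)) (hjk : j ≠ k) :
    adN (reflPar cadj P.par c j) (reflPar cadj P.par c k) (phiXm P c j)
      (1 + if cadj j k then 1 else 0) (phiXm P c k) = 0 := by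
  have hXZ : ∀ i, i ≠ c → sbr (P.par i) true (kxm P i) (kxp P c) = 0 := fun i hi => by
    have := sbr_kxp_kxm P c i
    rw [if_neg hi.symm, hc] at this
    exact sbr_eq_zero_symm this
  obtain ⟨s, hs⟩ := phiXm_eq P c j
  obtain ⟨t, ht⟩ := phiXm_eq P c k
  rw [hs, ht, adN_smul]
  refine smul_eq_zero_of_right _ ?_
  refine serre_reflGen (serreData_kxm P h) cadj_symm (cadj_irrefl h) (cadj_triangle_free h) c hc _
    ((serreData_kxp P h).sq c hc) hXZ (fun i hi hpi => ⟨-(-((P.a c i : ℤ) : R)), ?_⟩) j k hjk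
  have hic : i ≠ c := by rintro rfl; exact cadj_irrefl h i hi
  have h1 := hXZ i hic
  have h3 := mkK_rel P (KRel.hxm c i)
  rw [hpi] at h1
  rw [mkK_sbr, map_smul, hpi] at h3
  exact sbr_sbr_lower h1 (sbr_kxm_kxp_self P c hc) h3

/-- When `α_{c-1}` is even the bracket is odd and squares to zero; when `α_{c-1}` is odd the
bracket is even and the claim is that it commutes with itself. -/
lemma sbr_self_sbr {X : Fin (m + n) → KM P} (S : SerreData cadj P.par X) (c : Fin (m + n))
    (hc : P.par c = true) :
    sbr (xor (P.par (c - 1)) true) (xor (P.par (c - 1)) true)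
      (sbr (P.par (c - 1)) true (X (c - 1)) (X c))
      (sbr (P.par (c - 1)) true (X (c - 1)) (X c)) = 0 := by
  have hs := S.serre (c - 1) c (Or.inl (by simp))
  cases hp : P.par (c - 1)
  · rw [hp, hc] at hs
    have := sq_sbr (S.sq c hc) hs
    simp only [Bool.false_xor]
    generalize sbr false true (X (c - 1)) (X c) = B at *
    simp [sbr, sg, this]
  · simp [sbr, sg]

end Map

end Concrete

/-- With `φ` the map induced by the odd reflection at the odd simple root
`α_c` (`c = i+1`), the Serre relations are preserved:
`φ((ad x^±_{β_j})^{1+|a'_{jk}|}(x^±_{β_k})) = 0`; in particular, in `ŝl(m|n,Π)` one has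
`[[x^±_{α_{c−1},0},x^±_{α_c,0}], [x^±_{α_{c−1},0},x^±_{α_c,0}]] = 0` (the image of
`[x^±_{β_{c−1},0}, x^±_{β_{c−1},0}]` for the odd root `β_{c−1}`) and
`[x^∓_{α_c,0}, x^∓_{α_c,0}] = 0`. -/
theorem phi_serre_relations (m n : ℕ) [NeZero (m + n)]
    (hm : 2 ≤ m) (hn : 2 ≤ n) (hmn : m ≠ n)
    (P : SimpleRootSystem m n) (c : Fin (m + n)) (hodd : P.par c = true) :
    (∀ j k : Fin (m + n), j ≠ k →
      adN ((P.reflect c).par j) ((P.reflect c).par k) (phiXp P c j)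
        (1 + ((P.reflect c).a j k).natAbs) (phiXp P c k) = 0 ∧
      adN ((P.reflect c).par j) ((P.reflect c).par k) (phiXm P c j)
        (1 + ((P.reflect c).a j k).natAbs) (phiXm P c k) = 0) ∧
    (let pp := xor (P.par (c - 1)) true
     let Bp := sbr (P.par (c - 1)) true (kxp P (c - 1)) (kxp P c)
     let Bm := sbr (P.par (c - 1)) true (kxm P (c - 1)) (kxm P c)
     sbr pp pp Bp Bp = 0 ∧ sbr pp pp Bm Bm = 0 ∧
     sbr true true (kxm P c) (kxm P c) = 0 ∧ sbr true true (kxp P c) (kxp P c) = 0) := by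
  -- `m ≠ n` with `m, n ≥ 2` makes the diagram a cycle of length at least 5: no double edges,
  -- no triangles
  have h : 5 ≤ m + n := by omega
  refine ⟨fun j k hjk => ?_, sbr_self_sbr P (serreData_kxp P h) c hodd,
    sbr_self_sbr P (serreData_kxm P h) c hodd, ?_, ?_⟩
  · classical
    rw [reflect_par h P c hodd j, reflect_par h P c hodd k, natAbs_a h _ j k hjk]
    exact ⟨serre_phiXp P h c hodd j k hjk, serre_phiXm P h c hodd j k hjk⟩
  · simp [sbr, sg, (serreData_kxm P h).sq c hodd]
  · simp [sbr, sg, (serreData_kxp P h).sq c hodd]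

end ASY
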